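/- Let N be a positive integer and f a real-valued function on primes satisfying |f(p)| ≤ K p^{-c} for constants K, c > 0. Define J(x) = ∑_{n ≤ x, (n,N)=1} μ(n)²/n · ∏_{p|n} (1 + f(p)), assuming 1 + f(p) ≥ 0 for all p. Then J(x) = ∏_{p|N} (1 - 1/p) · ∏_{p ∤ N} (1 - 1/p²)(1 + f(p)/(p+1)) · log x + O(log log(N+2)), where the implied constant depends only on K and c, not on N or x ≥ 2. -/

import Mathlib

open Finset

theorem summable_log_mul_rpow {c : ℝ} (hc : 0 < c) :
    Summable fun n : ℕ => Real.log n * (n : ℝ) ^ (-1 - c) := by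
  have hs : Summable fun n : ℕ => (2 / c) * (n : ℝ) ^ (-1 - c / 2) :=
    (Real.summable_nat_rpow.2 (by linarith)).mul_left _
  refine hs.of_nonneg_of_le (fun n => by positivity) fun n => ?_
  rcases Nat.eq_zero_or_pos n with rfl | hn
  · simp; positivity
  have hn' : (0 : ℝ) < n := by exact_mod_cast hn
  have h1 := Real.log_le_rpow_div hn'.le (half_pos hc)
  have h2 : (n : ℝ) ^ (-1 - c / 2) = (n : ℝ) ^ (c / 2) * (n : ℝ) ^ (-1 - c) := by
    rw [← Real.rpow_add hn']; ring_nf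
  rw [h2]
  calc _ ≤ (n : ℝ) ^ (c / 2) / (c / 2) * (n : ℝ) ^ (-1 - c) := by gcongr
    _ = _ := by field_simp

theorem abs_log_factorial_sub_le (n : ℕ) :
    |Real.log (n.factorial : ℝ) - n * Real.log n| ≤ n := by
  rcases Nat.eq_zero_or_pos n with rfl | hn
  · simp
  have hn' : (0 : ℝ) < n := by exact_mod_cast hn
  have hf : (0 : ℝ) < n.factorial := by exact_mod_cast n.factorial_pos
  have h1 : Real.log (n.factorial : ℝ) ≤ n * Real.log n := by
    rw [← Real.log_pow]
    apply Real.log_le_log hf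
    exact_mod_cast n.factorial_le_pow
  have h2 : n * Real.log n - Real.log (n.factorial : ℝ) ≤ n := by
    rw [← Real.log_pow, ← Real.log_div (by positivity) hf.ne']
    rw [Real.log_le_iff_le_exp (by positivity)]
    exact Real.pow_div_factorial_le_exp _ hn'.le _
  rw [abs_le]; constructor <;> linarith

theorem log_factorial_eq_sum_primes (n : ℕ) :
    Real.log (n.factorial : ℝ) =
      ∑ p ∈ Ioc 0 n with p.Prime, (n.factorial.factorization p : ℝ) * Real.log p := by
  rw [Real.log_nat_eq_sum_factorization, Finsupp.sum_of_support_subset]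
  · intro p hp
    simp only [Nat.support_factorization, Nat.mem_primeFactors] at hp
    simp only [mem_filter, mem_Ioc]
    exact ⟨⟨hp.1.pos, hp.1.dvd_factorial.1 hp.2.1⟩, hp.1⟩
  · simp

/-- Mertens' first theorem at integers. -/
theorem exists_abs_sum_log_div_sub_log_le :
    ∃ A : ℝ, 0 ≤ A ∧ ∀ n : ℕ, 1 ≤ n →
      |(∑ p ∈ Ioc 0 n with p.Prime, Real.log p / p) - Real.log n| ≤ A := by
  have hsum := summable_log_mul_rpow one_pos
  set S := ∑' n : ℕ, Real.log n * (n : ℝ) ^ (-1 - 1 : ℝ) with hS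
  have hS0 : 0 ≤ S := tsum_nonneg fun n => by positivity
  refine ⟨1 + 2 * S + Real.log 4, by positivity, fun n hn => ?_⟩
  have hn' : (0 : ℝ) < n := by exact_mod_cast hn
  have hfac := abs_le.1 (abs_log_factorial_sub_le n)
  rw [log_factorial_eq_sum_primes] at hfac
  set T := ∑ p ∈ Ioc 0 n with p.Prime, Real.log p / p with hT
  have hlow : n * T - Real.log 4 * n ≤
      ∑ p ∈ Ioc 0 n with p.Prime, (n.factorial.factorization p : ℝ) * Real.log p := by
    have hth : ∑ p ∈ Ioc 0 n with p.Prime, Real.log p ≤ Real.log 4 * n := by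
      have := Chebyshev.theta_le_log4_mul_x hn'.le
      rwa [Chebyshev.theta, Nat.floor_natCast] at this
    have : n * T - ∑ p ∈ Ioc 0 n with p.Prime, Real.log p ≤
        ∑ p ∈ Ioc 0 n with p.Prime, (n.factorial.factorization p : ℝ) * Real.log p := by
      rw [hT, mul_sum, ← sum_sub_distrib]
      refine sum_le_sum fun p hp => ?_
      simp only [mem_filter, mem_Ioc] at hp
      have hp0 : (0 : ℝ) < p := by exact_mod_cast hp.1.1
      have h1 : n / p ≤ n.factorial.factorization p := by
        rw [Nat.factorization_factorial hp.2 (b := Nat.log p n + 2) (by lia)]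
        have := single_le_sum (f := fun i => n / p ^ i) (s := Ico 1 (Nat.log p n + 2))
          (fun _ _ => Nat.zero_le _) (a := 1) (by simp)
        simpa using this
      have h2 : (n : ℝ) / p ≤ n.factorial.factorization p + 1 := by
        have h3 := (Nat.lt_floor_add_one ((n : ℝ) / p)).le
        rw [Nat.floor_div_eq_div] at h3
        have : ((n / p : ℕ) : ℝ) ≤ n.factorial.factorization p := by exact_mod_cast h1
        linarith
      have hl : 0 ≤ Real.log p := Real.log_natCast_nonneg p
      calc n * (Real.log p / p) - Real.log p = (n / p - 1) * Real.log p := by ring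
        _ ≤ _ := by gcongr; linarith
    linarith
  have hupp : ∑ p ∈ Ioc 0 n with p.Prime, (n.factorial.factorization p : ℝ) * Real.log p ≤
      n * T + n * (2 * S) := by
    have h1 : ∑ p ∈ Ioc 0 n with p.Prime, (n.factorial.factorization p : ℝ) * Real.log p ≤
        ∑ p ∈ Ioc 0 n with p.Prime, (n * (Real.log p / p) +
          n * (2 * (Real.log p * (p : ℝ) ^ (-1 - 1 : ℝ)))) := by
      refine sum_le_sum fun p hp => ?_
      simp only [mem_filter, mem_Ioc] at hp
      have hp2 : (2 : ℝ) ≤ p := by exact_mod_cast hp.2.two_le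
      have h1 : (n.factorial.factorization p : ℝ) ≤ n / (p - 1) := by
        have := Nat.factorization_factorial_le_div_pred hp.2 n
        calc (n.factorial.factorization p : ℝ) ≤ ((n / (p - 1) : ℕ) : ℝ) := by exact_mod_cast this
          _ ≤ n / ((p - 1 : ℕ) : ℝ) := Nat.cast_div_le
          _ = _ := by rw [Nat.cast_sub hp.1.1]; simp
      have hl : 0 ≤ Real.log p := Real.log_natCast_nonneg p
      have h3 : (p : ℝ) ^ (-1 - 1 : ℝ) = 1 / (p : ℝ) ^ 2 := by
        rw [show (-1 - 1 : ℝ) = -((2 : ℕ) : ℝ) by norm_num, Real.rpow_neg (by positivity),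
          Real.rpow_natCast, one_div]
      rw [h3]
      have h4 : 1 / ((p : ℝ) - 1) ≤ 1 / p + 2 * (1 / (p : ℝ) ^ 2) := by
        have : 1 / (p : ℝ) + 2 * (1 / (p : ℝ) ^ 2) = (p + 2) / p ^ 2 := by field_simp
        rw [this, div_le_div_iff₀ (by linarith) (by positivity)]
        nlinarith
      calc _ ≤ n / ((p : ℝ) - 1) * Real.log p := by gcongr
        _ = n * (1 / ((p : ℝ) - 1)) * Real.log p := by ring
        _ ≤ n * (1 / p + 2 * (1 / (p : ℝ) ^ 2)) * Real.log p := by gcongr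
        _ = _ := by ring
    refine h1.trans ?_
    rw [sum_add_distrib, ← mul_sum, ← mul_sum, ← mul_sum]
    gcongr
    exact hsum.sum_le_tsum _ fun n _ => by positivity
  have hA : n * (T - Real.log n) ≤ n * (1 + Real.log 4) := by linarith
  have hB : n * (Real.log n - T) ≤ n * (1 + 2 * S) := by linarith
  have hA' := le_of_mul_le_mul_left hA hn'
  have hB' := le_of_mul_le_mul_left hB hn'
  have : 0 ≤ Real.log 4 := by positivity
  rw [abs_le]; constructor <;> linarith

theorem abs_log_sub_log_floor_le {z : ℝ} (hz : 1 ≤ z) :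
    |Real.log ⌊z⌋₊ - Real.log z| ≤ Real.log 2 := by
  have h1 : 1 ≤ ⌊z⌋₊ := Nat.one_le_floor_iff _ |>.2 hz
  have h1' : (1 : ℝ) ≤ ⌊z⌋₊ := by exact_mod_cast h1
  have h2 : (⌊z⌋₊ : ℝ) ≤ z := Nat.floor_le (by linarith)
  have h3 := Nat.lt_floor_add_one z
  have h4 : Real.log ⌊z⌋₊ ≤ Real.log z := Real.log_le_log (by linarith) h2
  have h5 : Real.log z ≤ Real.log (2 * ⌊z⌋₊) := Real.log_le_log (by linarith) (by linarith)
  rw [Real.log_mul (by norm_num) (by linarith)] at h5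
  have : 0 ≤ Real.log 2 := by positivity
  rw [abs_le]; constructor <;> linarith

/-- Mertens' first theorem. -/
theorem exists_abs_sum_log_div_floor_sub_log_le :
    ∃ A : ℝ, 0 ≤ A ∧ ∀ z : ℝ, 1 ≤ z →
      |(∑ p ∈ Ioc 0 ⌊z⌋₊ with p.Prime, Real.log p / p) - Real.log z| ≤ A := by
  obtain ⟨A, hA, h⟩ := exists_abs_sum_log_div_sub_log_le
  refine ⟨A + Real.log 2, by positivity, fun z hz => ?_⟩
  have h1 := h ⌊z⌋₊ ((Nat.one_le_floor_iff _).2 hz)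
  exact (abs_sub_le _ _ _).trans (add_le_add h1 (abs_log_sub_log_floor_le hz))

theorem log_log_add_two_ge {N : ℕ} (hN : 1 ≤ N) :
    Real.log (Real.log 3) ≤ Real.log (Real.log (N + 2)) ∧ 0 < Real.log (Real.log 3) := by
  have h3 : 1 < Real.log 3 := by
    rw [Real.lt_log_iff_exp_lt (by norm_num)]
    linarith [Real.exp_one_lt_d9]
  refine ⟨?_, Real.log_pos h3⟩
  have hN' : (1 : ℝ) ≤ N := by exact_mod_cast hN
  exact Real.log_le_log (by linarith) (Real.log_le_log (by norm_num) (by linarith))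

theorem exists_sum_primeFactors_log_div_le :
    ∃ A : ℝ, 0 ≤ A ∧ ∀ N : ℕ, 1 ≤ N →
      1 + ∑ p ∈ N.primeFactors, Real.log p / p ≤ A * Real.log (Real.log (N + 2)) := by
  obtain ⟨A, hA, h⟩ := exists_abs_sum_log_div_floor_sub_log_le
  have h0 := (log_log_add_two_ge le_rfl).2
  refine ⟨1 + (A + 2) / Real.log (Real.log 3), by positivity, fun N hN => ?_⟩
  obtain ⟨hN3, -⟩ := log_log_add_two_ge hN
  have hN' : (1 : ℝ) ≤ N := by exact_mod_cast hN
  set y := Real.log ((N : ℝ) + 2) with hy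
  have hy1 : 1 ≤ y := by
    by_contra! hlt
    have hy0 : 0 ≤ y := Real.log_nonneg (by linarith)
    have := Real.log_nonpos hy0 hlt.le
    linarith
  have hsmall : ∑ p ∈ N.primeFactors with p ≤ ⌊y⌋₊, Real.log p / p ≤ Real.log y + A := by
    have h1 := (abs_le.1 (h y hy1)).2
    have h2 : ∑ p ∈ N.primeFactors with p ≤ ⌊y⌋₊, Real.log p / p ≤
        ∑ p ∈ Ioc 0 ⌊y⌋₊ with p.Prime, Real.log p / p := by
      refine sum_le_sum_of_subset_of_nonneg ?_ fun p _ _ => by positivity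
      intro p hp
      simp only [mem_filter, Nat.mem_primeFactors, mem_Ioc] at hp ⊢
      exact ⟨⟨hp.1.1.pos, hp.2⟩, hp.1.1⟩
    linarith
  have hbig : ∑ p ∈ N.primeFactors with ¬ p ≤ ⌊y⌋₊, Real.log p / p ≤ 1 := by
    have h1 : ∑ p ∈ N.primeFactors with ¬ p ≤ ⌊y⌋₊, Real.log p / p ≤
        ∑ p ∈ N.primeFactors with ¬ p ≤ ⌊y⌋₊, Real.log p / y := by
      refine sum_le_sum fun p hp => ?_
      simp only [mem_filter, not_le] at hp
      have := (Nat.floor_lt (by linarith)).1 hp.2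
      have hl : 0 ≤ Real.log p := Real.log_natCast_nonneg p
      gcongr
    have h2 : ∑ p ∈ N.primeFactors with ¬ p ≤ ⌊y⌋₊, Real.log p ≤
        ∑ p ∈ N.primeFactors, Real.log p :=
      sum_le_sum_of_subset_of_nonneg (filter_subset _ _) fun p _ _ => Real.log_natCast_nonneg p
    have h3 : ∑ p ∈ N.primeFactors, Real.log p ≤ y := by
      rw [← Real.log_prod (fun p hp => by
        have := (Nat.prime_of_mem_primeFactors hp).pos
        positivity), ← Nat.cast_prod]
      have h4 := Nat.le_of_dvd hN (Nat.prod_primeFactors_dvd N)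
      have h4' : ((∏ p ∈ N.primeFactors, p : ℕ) : ℝ) ≤ N := by exact_mod_cast h4
      refine Real.log_le_log ?_ (by linarith)
      exact_mod_cast prod_pos fun p hp => (Nat.prime_of_mem_primeFactors hp).pos
    rw [← sum_div] at h1
    refine h1.trans ?_
    rw [div_le_one (by linarith)]
    linarith
  have hsplit := sum_filter_add_sum_filter_not N.primeFactors (fun p => p ≤ ⌊y⌋₊)
    (fun p => Real.log p / (p : ℝ))
  have : A + 2 ≤ (A + 2) / Real.log (Real.log 3) * Real.log y := by
    rw [div_mul_eq_mul_div, le_div_iff₀ h0]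
    gcongr
  linarith

theorem sum_Ioc_sum_divisorsAntidiagonal (F : ℕ → ℕ → ℝ) (M : ℕ) :
    ∑ n ∈ Ioc 0 M, ∑ x ∈ n.divisorsAntidiagonal, F x.1 x.2 =
      ∑ a ∈ Ioc 0 M, ∑ b ∈ Ioc 0 (M / a), F a b := by
  rw [sum_sigma', sum_sigma']
  refine sum_bij' (fun x _ => ⟨x.2.1, x.2.2⟩) (fun y _ => ⟨y.1 * y.2, (y.1, y.2)⟩) ?_ ?_ ?_ ?_ ?_
  · rintro ⟨n, a, b⟩ h
    simp only [mem_sigma, mem_Ioc, Nat.mem_divisorsAntidiagonal] at h ⊢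
    obtain ⟨⟨h1, h2⟩, rfl, h3⟩ := h
    have ha : 0 < a := Nat.pos_of_ne_zero (left_ne_zero_of_mul h3)
    have hb : 0 < b := Nat.pos_of_ne_zero (right_ne_zero_of_mul h3)
    exact ⟨⟨ha, (Nat.le_mul_of_pos_right a hb).trans h2⟩, hb,
      (Nat.le_div_iff_mul_le ha).2 (by rwa [mul_comm])⟩
  · rintro ⟨a, b⟩ h
    simp only [mem_sigma, mem_Ioc, Nat.mem_divisorsAntidiagonal] at h ⊢
    obtain ⟨⟨ha, h1⟩, hb, h2⟩ := h
    have := (Nat.le_div_iff_mul_le ha).1 h2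
    exact ⟨⟨by positivity, by rwa [mul_comm]⟩, by simp, by positivity⟩
  · rintro ⟨n, a, b⟩ h
    simp only [mem_sigma, mem_Ioc, Nat.mem_divisorsAntidiagonal] at h ⊢
    obtain ⟨-, rfl, -⟩ := h
    rfl
  · rintro ⟨a, b⟩ h
    rfl
  · rintro ⟨n, a, b⟩ h
    rfl

theorem sum_Ioc_sum_Ioc_div_comm (F : ℕ → ℕ → ℝ) (M : ℕ) :
    ∑ a ∈ Ioc 0 M, ∑ b ∈ Ioc 0 (M / a), F a b = ∑ b ∈ Ioc 0 M, ∑ a ∈ Ioc 0 (M / b), F a b := by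
  refine sum_comm' fun a b => ?_
  simp only [mem_Ioc]
  constructor
  · rintro ⟨⟨ha, h1⟩, hb, h2⟩
    have h3 := (Nat.le_div_iff_mul_le ha).1 h2
    exact ⟨⟨ha, (Nat.le_div_iff_mul_le hb).2 (by rwa [mul_comm])⟩, hb,
      (Nat.le_mul_of_pos_right b ha).trans h3⟩
  · rintro ⟨⟨ha, h1⟩, hb, h2⟩
    have h3 := (Nat.le_div_iff_mul_le hb).1 h1
    exact ⟨⟨ha, (Nat.le_mul_of_pos_right a hb).trans h3⟩, hb,
      (Nat.le_div_iff_mul_le ha).2 (by rwa [mul_comm])⟩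

theorem sum_Ioc_dvd {p : ℕ} (hp : 0 < p) (F : ℕ → ℝ) (M : ℕ) :
    ∑ m ∈ Ioc 0 M with p ∣ m, F m = ∑ k ∈ Ioc 0 (M / p), F (p * k) := by
  symm
  refine sum_bij (fun k _ => p * k) ?_ ?_ ?_ ?_
  · intro k hk
    simp only [mem_Ioc, mem_filter] at hk ⊢
    have := (Nat.le_div_iff_mul_le hp).1 hk.2
    exact ⟨⟨Nat.mul_pos hp hk.1, by rwa [mul_comm]⟩, dvd_mul_right _ _⟩
  · intro a _ b _ h
    exact Nat.eq_of_mul_eq_mul_left hp h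
  · intro m hm
    simp only [mem_Ioc, mem_filter] at hm
    obtain ⟨⟨h0, h1⟩, k, rfl⟩ := hm
    refine ⟨k, ?_, rfl⟩
    simp only [mem_Ioc]
    exact ⟨Nat.pos_of_mul_pos_left h0, (Nat.le_div_iff_mul_le hp).2 (by rwa [mul_comm])⟩
  · intro k _; rfl

/-- A nonnegative multiplicative function whose local factors are at most `1 + a p` with `a`
summable is summable, with the obvious bound on the sum. -/
theorem summable_and_tsum_le_of_local_factor_le {φ : ℕ → ℝ} (h0 : ∀ n, 0 ≤ φ n) (h1 : φ 1 = 1)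
    (hmul : ∀ {m n : ℕ}, m.Coprime n → φ (m * n) = φ m * φ n) (hzero : φ 0 = 0)
    (hsum : ∀ {p : ℕ}, p.Prime → Summable fun e : ℕ => φ (p ^ e)) {a : ℕ → ℝ}
    (ha0 : ∀ p, 0 ≤ a p) (ha : Summable a)
    (hle : ∀ {p : ℕ}, p.Prime → ∑' e : ℕ, φ (p ^ e) ≤ 1 + a p) :
    Summable φ ∧ ∑' n, φ n ≤ Real.exp (∑' p, a p) := by
  have key : ∀ n, ∑ i ∈ range n, φ i ≤ Real.exp (∑' p, a p) := by
    intro n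
    obtain ⟨hs, hp⟩ := EulerProduct.summable_and_hasSum_smoothNumbers_prod_primesBelow_tsum
      (f := φ) h1 (fun {m n} => hmul) (fun hp => (hsum hp).norm) n
    have e1 : ∑ i ∈ range n, φ i ≤ ∏ p ∈ n.primesBelow, ∑' e : ℕ, φ (p ^ e) := by
      have hs' : HasSum ((Nat.smoothNumbers n).indicator φ) (∏ p ∈ n.primesBelow, ∑' e, φ (p ^ e)) :=
        (hasSum_subtype_iff_indicator (f := φ)).1 hp
      refine le_trans (le_of_eq ?_) (sum_le_hasSum (range n)
        (fun i _ => Set.indicator_nonneg (fun x _ => h0 x) i) hs')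
      refine sum_congr rfl fun i hi => ?_
      rcases Nat.eq_zero_or_pos i with rfl | hi0
      · simp [Set.indicator, hzero]
      · rw [Set.indicator_of_mem]
        exact Nat.mem_smoothNumbers_of_lt hi0 (mem_range.1 hi)
    refine e1.trans ?_
    calc ∏ p ∈ n.primesBelow, ∑' e : ℕ, φ (p ^ e) ≤ ∏ p ∈ n.primesBelow, Real.exp (a p) := by
          refine prod_le_prod (fun p _ => tsum_nonneg fun e => h0 _) fun p hp => ?_
          exact (hle (Nat.prime_of_mem_primesBelow hp)).trans (by linarith [Real.add_one_le_exp (a p)])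
      _ = Real.exp (∑ p ∈ n.primesBelow, a p) := (Real.exp_sum _ _).symm
      _ ≤ _ := Real.exp_le_exp.2 (ha.sum_le_tsum _ fun p _ => ha0 p)
  exact ⟨summable_of_sum_range_le h0 key, Real.tsum_le_of_sum_range_le h0 key⟩

/-- The multiplicative function `μ(n)² 1_{(n,N)=1} ∏_{p ∣ n} (1 + f p)`. -/
noncomputable def squarefreeWeight (N : ℕ) (f : ℕ → ℝ) : ArithmeticFunction ℝ where
  toFun n := if Squarefree n ∧ Nat.gcd n N = 1 then ∏ p ∈ n.primeFactors, (1 + f p) else 0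
  map_zero' := by simp

section squarefreeWeight

variable {N : ℕ} {f : ℕ → ℝ}

theorem squarefreeWeight_apply (n : ℕ) : squarefreeWeight N f n =
    if Squarefree n ∧ Nat.gcd n N = 1 then ∏ p ∈ n.primeFactors, (1 + f p) else 0 := rfl

theorem squarefreeWeight_nonneg (hf : ∀ p : ℕ, p.Prime → 0 ≤ 1 + f p) (n : ℕ) :
    0 ≤ squarefreeWeight N f n := by
  rw [squarefreeWeight_apply]
  split_ifs
  · exact prod_nonneg fun p hp => hf p (Nat.prime_of_mem_primeFactors hp)
  · exact le_rfl

theorem squarefreeWeight_le_one_right (hf : ∀ p : ℕ, p.Prime → 0 ≤ 1 + f p) (n : ℕ) :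
    squarefreeWeight N f n ≤ squarefreeWeight 1 f n := by
  have h := squarefreeWeight_nonneg (N := 1) hf n
  simp only [squarefreeWeight_apply] at h ⊢
  by_cases hn : Squarefree n <;> by_cases hN : n.gcd N = 1 <;> simp_all

theorem isMultiplicative_squarefreeWeight : (squarefreeWeight N f).IsMultiplicative := by
  refine ⟨by simp [squarefreeWeight_apply], fun {m n} hmn => ?_⟩
  simp only [squarefreeWeight_apply, Nat.squarefree_mul hmn, hmn.primeFactors_mul,
    prod_union hmn.disjoint_primeFactors]
  have : (m * n).gcd N = 1 ↔ m.gcd N = 1 ∧ n.gcd N = 1 := Nat.coprime_mul_iff_left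
  simp only [this]
  by_cases h1 : Squarefree m <;> by_cases h2 : Squarefree n <;> by_cases h3 : m.gcd N = 1 <;>
    by_cases h4 : n.gcd N = 1 <;> simp [h1, h2, h3, h4]

theorem squarefreeWeight_prime {p : ℕ} (hp : p.Prime) :
    squarefreeWeight N f p = if p ∣ N then 0 else 1 + f p := by
  rw [squarefreeWeight_apply, hp.primeFactors]
  have : p.gcd N = 1 ↔ ¬ p ∣ N := hp.coprime_iff_not_dvd
  by_cases h : p ∣ N <;> simp [this, h, hp.prime.squarefree]

theorem squarefreeWeight_prime_pow {p k : ℕ} (hp : p.Prime) (hk : 2 ≤ k) :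
    squarefreeWeight N f (p ^ k) = 0 := by
  rw [squarefreeWeight_apply, if_neg]
  rintro ⟨h, -⟩
  rw [Nat.squarefree_pow_iff hp.ne_one (by lia)] at h
  lia

open ArithmeticFunction in
/-- The Dirichlet convolution of the Möbius function with `squarefreeWeight N f`. -/
noncomputable def weightTwist (N : ℕ) (f : ℕ → ℝ) : ArithmeticFunction ℝ :=
  (moebius : ArithmeticFunction ℝ) * squarefreeWeight N f

open ArithmeticFunction in
theorem isMultiplicative_weightTwist : (weightTwist N f).IsMultiplicative :=
  (isMultiplicative_moebius.intCast).mul isMultiplicative_squarefreeWeight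

open ArithmeticFunction in
theorem sum_divisors_weightTwist (n : ℕ) :
    ∑ d ∈ n.divisors, weightTwist N f d = squarefreeWeight N f n := by
  rw [← coe_zeta_mul_apply, weightTwist, ← mul_assoc, coe_zeta_mul_coe_moebius, one_mul]

theorem weightTwist_prime_pow_succ {p : ℕ} (hp : p.Prime) (k : ℕ) :
    weightTwist N f (p ^ (k + 1)) =
      squarefreeWeight N f (p ^ (k + 1)) - squarefreeWeight N f (p ^ k) := by
  rw [← sum_divisors_weightTwist (p ^ (k + 1)), ← sum_divisors_weightTwist (p ^ k),
    Nat.sum_divisors_prime_pow hp, Nat.sum_divisors_prime_pow hp, sum_range_succ _ (k + 1)]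
  ring

theorem weightTwist_prime_pow_eq_zero {p k : ℕ} (hp : p.Prime) (hk : 3 ≤ k) :
    weightTwist N f (p ^ k) = 0 := by
  obtain ⟨k, rfl⟩ : ∃ j, k = j + 1 := ⟨k - 1, by lia⟩
  rw [weightTwist_prime_pow_succ hp, squarefreeWeight_prime_pow hp (by lia),
    squarefreeWeight_prime_pow hp (by lia), sub_zero]

theorem hasSum_prime_pow {p : ℕ} (hp : p.Prime) {ψ : ℕ → ℝ}
    (hψ : ∀ k, weightTwist N f (p ^ k) = 0 → ψ k = 0) : HasSum ψ (ψ 0 + ψ 1 + ψ 2) := by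
  have : HasSum ψ (∑ k ∈ range 3, ψ k) := hasSum_sum_of_ne_finset_zero fun k hk =>
    hψ k (weightTwist_prime_pow_eq_zero hp (by simpa using hk))
  simpa [sum_range_succ] using this

theorem weightTwist_prime {p : ℕ} (hp : p.Prime) :
    weightTwist N f p = if p ∣ N then -1 else f p := by
  have := weightTwist_prime_pow_succ (N := N) (f := f) hp 0
  simp only [zero_add, pow_one, pow_zero, isMultiplicative_squarefreeWeight.1,
    squarefreeWeight_prime hp] at this
  rw [this]; split_ifs <;> ring

theorem weightTwist_prime_sq {p : ℕ} (hp : p.Prime) :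
    weightTwist N f (p ^ 2) = if p ∣ N then 0 else -(1 + f p) := by
  have := weightTwist_prime_pow_succ (N := N) (f := f) hp 1
  simp only [pow_one, squarefreeWeight_prime hp, Nat.reduceAdd,
    squarefreeWeight_prime_pow hp le_rfl] at this
  rw [this]; split_ifs <;> ring

theorem tsum_weightTwist_prime_pow {p : ℕ} (hp : p.Prime) :
    ∑' e : ℕ, weightTwist N f (p ^ e) / ((p ^ e : ℕ) : ℝ) =
      (if p ∣ N then 1 - 1 / (p : ℝ) else 1) *
      (if p ∣ N then 1 else (1 - 1 / (p : ℝ) ^ 2) * (1 + f p / ((p : ℝ) + 1))) := by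
  have hp0 : (0 : ℝ) < p := by exact_mod_cast hp.pos
  have h := hasSum_prime_pow (N := N) (f := f) hp
    (ψ := fun e => weightTwist N f (p ^ e) / ((p ^ e : ℕ) : ℝ)) (fun k hk => by simp [hk])
  rw [h.tsum_eq]
  simp only [pow_zero, pow_one, isMultiplicative_weightTwist.1, weightTwist_prime hp,
    weightTwist_prime_sq hp]
  push_cast
  split_ifs
  · ring
  · have : (p : ℝ) + 1 ≠ 0 := by positivity
    field_simp
    ring

theorem abs_le_of_abs_le_mul_rpow {K c : ℝ} (hK : 0 < K) (hc : 0 < c)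
    (hf : ∀ p : ℕ, p.Prime → |f p| ≤ K * (p : ℝ) ^ (-c)) {p : ℕ} (hp : p.Prime) : |f p| ≤ K := by
  have hp1 : (1 : ℝ) ≤ p := by exact_mod_cast hp.one_le
  have : (p : ℝ) ^ (-c) ≤ 1 := Real.rpow_le_one_of_one_le_of_nonpos hp1 (by linarith)
  exact (hf p hp).trans (by nlinarith)

theorem rpow_neg_one_sub {p : ℕ} (hp : 0 < p) (c : ℝ) :
    (p : ℝ) ^ (-1 - c) = (p : ℝ) ^ (-c) / p := by
  have : (0 : ℝ) < p := by exact_mod_cast hp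
  rw [show -1 - c = -c + -1 by ring, Real.rpow_add this, Real.rpow_neg_one]
  rfl

theorem rpow_neg_two (p : ℕ) : (p : ℝ) ^ (-2 : ℝ) = 1 / (p : ℝ) ^ 2 := by
  rw [show (-2 : ℝ) = -((2 : ℕ) : ℝ) by norm_num, Real.rpow_neg p.cast_nonneg,
    Real.rpow_natCast, one_div]

theorem summable_abs_weightTwist_div {K c : ℝ} (hK : 0 < K) (hc : 0 < c) (hN : 1 ≤ N)
    (hf : ∀ p : ℕ, p.Prime → |f p| ≤ K * (p : ℝ) ^ (-c)) :
    Summable (fun n : ℕ => |weightTwist N f n| / n) ∧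
    ∑' n : ℕ, |weightTwist N f n| / n ≤
      Real.exp (∑' p : ℕ, (K * (p : ℝ) ^ (-1 - c) + (1 + K) * (p : ℝ) ^ (-2 : ℝ) +
        if p ∈ N.primeFactors then 1 else 0)) := by
  apply summable_and_tsum_le_of_local_factor_le
  · intro n; positivity
  · simp [isMultiplicative_weightTwist.1]
  · intro m n hmn
    rw [isMultiplicative_weightTwist.2 hmn, abs_mul]
    push_cast
    exact mul_div_mul_comm _ _ _ _
  · simp
  · intro p hp
    exact (hasSum_prime_pow (N := N) (f := f) hp fun k hk => by simp [hk]).summable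
  · intro p
    split_ifs <;> positivity
  · refine Summable.add (Summable.add ((Real.summable_nat_rpow.2 (by linarith)).mul_left _)
      ((Real.summable_nat_rpow.2 (by norm_num)).mul_left _)) ?_
    exact summable_of_ne_finset_zero (s := N.primeFactors) fun p hp => by simp [hp]
  · intro p hp
    rw [(hasSum_prime_pow (N := N) (f := f) hp fun k hk => by simp [hk]).tsum_eq]
    simp only [pow_zero, pow_one, isMultiplicative_weightTwist.1, weightTwist_prime hp,
      weightTwist_prime_sq hp]
    have hp1 : (1 : ℝ) ≤ p := by exact_mod_cast hp.one_le
    have hp0 : (0 : ℝ) < p := by linarith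
    rw [rpow_neg_one_sub hp.pos, rpow_neg_two]
    have hfp := hf p hp
    have hfK : |f p| ≤ K := abs_le_of_abs_le_mul_rpow hK hc hf hp
    have hf1 : |1 + f p| ≤ 1 + K := (abs_add_le _ _).trans (by simpa using hfK)
    push_cast
    by_cases hpN : p ∣ N
    · have : p ∈ N.primeFactors := Nat.mem_primeFactors.2 ⟨hp, hpN, by lia⟩
      simp only [hpN, this, if_true, abs_neg, abs_one, abs_zero, zero_div, div_one, add_zero]
      have h1 : 1 / (p : ℝ) ≤ 1 := by rw [div_le_one hp0]; exact hp1
      have h2 : 0 ≤ K * ((p : ℝ) ^ (-c) / p) + (1 + K) * (1 / (p : ℝ) ^ 2) := by positivity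
      linarith
    · have : p ∉ N.primeFactors := fun h => hpN (Nat.dvd_of_mem_primeFactors h)
      simp only [hpN, this, if_false, abs_neg, abs_one, div_one, add_zero]
      have h1 : |f p| / p ≤ K * ((p : ℝ) ^ (-c) / p) := by
        rw [← mul_div_assoc]; gcongr
      have h2 : |1 + f p| / (p : ℝ) ^ 2 ≤ (1 + K) * (1 / (p : ℝ) ^ 2) := by
        rw [mul_one_div]; gcongr
      linarith
end squarefreeWeight

section partialSums

open Filter Topology

variable {N : ℕ} {f : ℕ → ℝ}

theorem sum_squarefreeWeight_div_eq (M : ℕ) :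
    ∑ n ∈ Ioc 0 M, squarefreeWeight N f n / n =
      ∑ d ∈ Ioc 0 M, weightTwist N f d / d * (harmonic (M / d) : ℝ) := by
  have h := sum_Ioc_sum_divisorsAntidiagonal
    (fun a b => weightTwist N f a / (a : ℝ) * (1 / (b : ℝ))) M
  have hl : ∀ n ∈ Ioc 0 M, ∑ x ∈ n.divisorsAntidiagonal,
      weightTwist N f x.1 / x.1 * (1 / (x.2 : ℝ)) = squarefreeWeight N f n / n := by
    intro n _
    rw [← sum_divisors_weightTwist, sum_div,
      ← Nat.sum_divisorsAntidiagonal (fun d _ => weightTwist N f d / (n : ℝ))]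
    refine sum_congr rfl fun x hx => ?_
    obtain ⟨rfl, -⟩ := Nat.mem_divisorsAntidiagonal.1 hx
    push_cast
    rw [div_mul_div_comm, mul_one]
  rw [sum_congr rfl hl] at h
  rw [h]
  refine sum_congr rfl fun d _ => ?_
  rw [← mul_sum, harmonic_eq_sum_Icc]
  push_cast
  simp only [one_div]
  rfl

theorem sum_squarefreeWeight_div_le {x : ℝ} (hx : 1 ≤ x)
    (hs : Summable fun n : ℕ => |weightTwist N f n| / n) :
    ∑ n ∈ Ioc 0 ⌊x⌋₊, squarefreeWeight N f n / n ≤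
      (∑' n : ℕ, |weightTwist N f n| / n) * (1 + Real.log x) := by
  rw [sum_squarefreeWeight_div_eq]
  have hl : 0 ≤ Real.log x := Real.log_nonneg hx
  calc _ ≤ ∑ d ∈ Ioc 0 ⌊x⌋₊, |weightTwist N f d| / d * (1 + Real.log x) := by
        refine sum_le_sum fun d hd => ?_
        simp only [mem_Ioc] at hd
        have hd0 : (0 : ℝ) < d := by exact_mod_cast hd.1
        have hd1 : (1 : ℝ) ≤ d := by exact_mod_cast hd.1
        have hdx : (d : ℝ) ≤ x := (Nat.le_floor_iff (by linarith)).1 hd.2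
        have h1 : (harmonic (⌊x⌋₊ / d) : ℝ) ≤ 1 + Real.log x := by
          rw [← Nat.floor_div_natCast]
          refine (harmonic_floor_le_one_add_log _ ((one_le_div hd0).2 hdx)).trans ?_
          have : Real.log (x / d) ≤ Real.log x :=
            Real.log_le_log (by positivity) (div_le_self (by linarith) hd1)
          linarith
        have h2 : (0 : ℝ) ≤ harmonic (⌊x⌋₊ / d) := by
          rw [harmonic]; push_cast; positivity
        have h3 : weightTwist N f d / d ≤ |weightTwist N f d| / d := by
          gcongr; exact le_abs_self _
        calc _ ≤ |weightTwist N f d| / d * (harmonic (⌊x⌋₊ / d) : ℝ) := by gcongr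
          _ ≤ _ := by gcongr
    _ = (∑ d ∈ Ioc 0 ⌊x⌋₊, |weightTwist N f d| / d) * (1 + Real.log x) := (sum_mul ..).symm
    _ ≤ _ := by
        gcongr
        exact hs.sum_le_tsum _ fun n _ => by positivity

theorem tendsto_harmonic_floor_exp_div {d : ℕ} (hd : 0 < d) :
    Tendsto (fun u : ℝ => (harmonic (⌊Real.exp u⌋₊ / d) : ℝ) / u) atTop (𝓝 1) := by
  have hd0 : (0 : ℝ) < d := by exact_mod_cast hd
  have hlog : ∀ u : ℝ, Real.log (Real.exp u / d) = u - Real.log d := fun u => by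
    rw [Real.log_div (Real.exp_pos u).ne' hd0.ne', Real.log_exp]
  have hlim : ∀ a : ℝ, Tendsto (fun u : ℝ => (a + u) / u) atTop (𝓝 1) := by
    intro a
    have h1 : Tendsto (fun u : ℝ => a / u + 1) atTop (𝓝 (0 + 1)) :=
      (tendsto_const_nhds.div_atTop tendsto_id).add_const 1
    rw [zero_add] at h1
    refine h1.congr' ?_
    filter_upwards [eventually_gt_atTop 0] with u hu
    field_simp
  refine tendsto_of_tendsto_of_tendsto_of_le_of_le' (hlim (-Real.log d)) (hlim (1 - Real.log d))
    ?_ ?_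
  · filter_upwards [eventually_gt_atTop 0] with u hu
    rw [← Nat.floor_div_natCast]
    have := log_le_harmonic_floor (Real.exp u / d) (by positivity)
    rw [hlog] at this
    gcongr
    linarith
  · filter_upwards [eventually_gt_atTop 0, eventually_ge_atTop (Real.log d)] with u hu hud
    rw [← Nat.floor_div_natCast]
    have h1 : 1 ≤ Real.exp u / d := by
      rw [one_le_div hd0]
      exact (Real.log_le_iff_le_exp hd0).1 hud
    have := harmonic_floor_le_one_add_log (Real.exp u / d) h1
    rw [hlog] at this
    gcongr
    linarith

theorem tendsto_sum_squarefreeWeight_div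
    (hs : Summable fun n : ℕ => |weightTwist N f n| / n) :
    Tendsto (fun u : ℝ => (∑ n ∈ Ioc 0 ⌊Real.exp u⌋₊, squarefreeWeight N f n / n) / u) atTop
      (𝓝 (∑' d : ℕ, weightTwist N f d / d)) := by
  have heq : ∀ u : ℝ, (∑ n ∈ Ioc 0 ⌊Real.exp u⌋₊, squarefreeWeight N f n / n) / u =
      ∑' d : ℕ, weightTwist N f d / d * ((harmonic (⌊Real.exp u⌋₊ / d) : ℝ) / u) := by
    intro u
    rw [sum_squarefreeWeight_div_eq, sum_div, tsum_eq_sum (s := Ioc 0 ⌊Real.exp u⌋₊)]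
    · simp only [mul_div_assoc]
    · intro d hd
      simp only [mem_Ioc, not_and, not_le] at hd
      rcases Nat.eq_zero_or_pos d with rfl | hd0
      · simp
      · simp [Nat.div_eq_of_lt (hd hd0)]
  simp only [heq]
  refine tendsto_tsum_of_dominated_convergence (hs.mul_right 2) ?_ ?_
  · intro d
    rcases Nat.eq_zero_or_pos d with rfl | hd
    · simp
    · simpa using (tendsto_harmonic_floor_exp_div hd).const_mul (weightTwist N f d / d)
  · filter_upwards [eventually_ge_atTop 1] with u hu d
    rw [norm_mul, Real.norm_eq_abs, abs_div, Nat.abs_cast]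
    refine mul_le_mul_of_nonneg_left ?_ (by positivity)
    have h2 : (0 : ℝ) ≤ harmonic (⌊Real.exp u⌋₊ / d) := by
      rw [harmonic]; push_cast; positivity
    rw [Real.norm_of_nonneg (by positivity), div_le_iff₀ (by linarith)]
    rcases Nat.eq_zero_or_pos (⌊Real.exp u⌋₊ / d) with h0 | h0
    · rw [h0]; simp; linarith
    · have h1 := harmonic_le_one_add_log (⌊Real.exp u⌋₊ / d)
      have h3 : ((⌊Real.exp u⌋₊ / d : ℕ) : ℝ) ≤ Real.exp u := by
        refine le_trans ?_ (Nat.floor_le (Real.exp_pos u).le)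
        exact_mod_cast Nat.div_le_self _ _
      have h4 := (Real.log_le_iff_le_exp (by exact_mod_cast h0)).2 h3
      linarith

theorem tsum_weightTwist_div (hN : 1 ≤ N)
    (hs : Summable fun n : ℕ => |weightTwist N f n| / n)
    (hv : Summable fun p : Nat.Primes =>
      (if (p : ℕ) ∣ N then 1 else (1 - 1 / (p : ℝ) ^ 2) * (1 + f p / ((p : ℝ) + 1))) - 1) :
    ∑' d : ℕ, weightTwist N f d / d =
      (∏ p ∈ N.primeFactors, (1 - 1 / (p : ℝ))) *
        ∏' p : Nat.Primes,
          if (p : ℕ) ∣ N then 1 else (1 - 1 / (p : ℝ) ^ 2) * (1 + f p / ((p : ℝ) + 1)) := by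
  have hE := EulerProduct.eulerProduct_tprod (f := fun n : ℕ => weightTwist N f n / n)
    (by simp [isMultiplicative_weightTwist.1])
    (fun {m n} hmn => by
      rw [isMultiplicative_weightTwist.2 hmn]
      push_cast
      exact mul_div_mul_comm _ _ _ _)
    (by simpa [abs_div] using hs) (by simp)
  rw [← hE]
  have hu : HasProd (fun p : Nat.Primes => if (p : ℕ) ∣ N then 1 - 1 / (p : ℝ) else 1)
      (∏ p ∈ N.primeFactors, (1 - 1 / (p : ℝ))) := by
    have h1 : HasProd (fun p : ℕ => if p ∈ N.primeFactors then 1 - 1 / (p : ℝ) else 1)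
        (∏ p ∈ N.primeFactors, (1 - 1 / (p : ℝ))) := by
      have := hasProd_prod_of_ne_finset_one (L := .unconditional ℕ) (s := N.primeFactors)
        (f := fun p : ℕ => if p ∈ N.primeFactors then 1 - 1 / (p : ℝ) else 1)
        (fun p hp => by simp [hp])
      rwa [prod_congr rfl (fun p hp => if_pos hp)] at this
    have h2 := (Function.Injective.hasProd_iff (g := ((↑) : Nat.Primes → ℕ))
      (f := fun p : ℕ => if p ∈ N.primeFactors then 1 - 1 / (p : ℝ) else 1)
      Subtype.val_injective (fun p hp => by
        rw [if_neg]
        intro h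
        exact hp ⟨⟨p, Nat.prime_of_mem_primeFactors h⟩, rfl⟩)).2 h1
    refine h2.congr_fun ?_
    intro p
    have : (p : ℕ) ∈ N.primeFactors ↔ (p : ℕ) ∣ N := by
      simp [p.2, Nat.ne_zero_of_lt hN]
    simp only [Function.comp_apply, this]
  have hm : Multipliable fun p : Nat.Primes =>
      if (p : ℕ) ∣ N then 1 else (1 - 1 / (p : ℝ) ^ 2) * (1 + f p / ((p : ℝ) + 1)) := by
    simpa using Real.multipliable_one_add_of_summable hv
  rw [← hu.tprod_eq, ← hu.multipliable.tprod_mul hm]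
  exact tprod_congr fun p => tsum_weightTwist_prime_pow p.2

end partialSums

section tauberian

open Filter Topology

theorem hasDerivWithinAt_max_sub_zero (a t : ℝ) :
    HasDerivWithinAt (fun s => max (s - a) 0) (if a ≤ t then 1 else 0) (Set.Ici t) t := by
  split_ifs with h
  · have h1 : HasDerivWithinAt (fun s : ℝ => s - a) 1 (Set.Ici t) t :=
      ((hasDerivAt_id t).sub_const a).hasDerivWithinAt
    refine h1.congr (fun s hs => max_eq_left ?_) (max_eq_left ?_)
    · have : t ≤ s := hs
      linarith
    · linarith
  · push Not at h
    have h1 : HasDerivAt (fun _ : ℝ => (0 : ℝ)) 0 t := hasDerivAt_const t 0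
    refine (h1.congr_of_eventuallyEq ?_).hasDerivWithinAt
    filter_upwards [eventually_lt_nhds h] with s hs
    exact max_eq_right (by linarith)

theorem mem_Ioc_floor_exp_iff {u : ℝ} {n : ℕ} (hn : 0 < n) :
    n ∈ Ioc 0 ⌊Real.exp u⌋₊ ↔ Real.log n ≤ u := by
  have : (0 : ℝ) < n := by exact_mod_cast hn
  rw [mem_Ioc, Nat.le_floor_iff (Real.exp_pos u).le, Real.log_le_iff_le_exp this]
  simp [hn]

variable {g : ℕ → ℝ} {E P u : ℝ}

theorem abs_logMean_div_sq_sub_le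
    (hE : ∀ t, u ≤ t → |2 * ∑ n ∈ Ioc 0 ⌊Real.exp t⌋₊, g n * (t - Real.log n) -
      t * ∑ n ∈ Ioc 0 ⌊Real.exp t⌋₊, g n| ≤ E * t) (hu : 0 < u) {v : ℝ} (huv : u ≤ v) :
    |(∑ n ∈ Ioc 0 ⌊Real.exp v⌋₊, g n * (v - Real.log n)) / v ^ 2 -
      (∑ n ∈ Ioc 0 ⌊Real.exp u⌋₊, g n * (u - Real.log n)) / u ^ 2| ≤ E * (1 / u - 1 / v) := by
  set W : ℝ → ℝ := fun t => ∑ n ∈ Ioc 0 ⌊Real.exp v⌋₊, g n * max (t - Real.log n) 0 with hW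
  set W' : ℝ → ℝ := fun t => ∑ n ∈ Ioc 0 ⌊Real.exp v⌋₊, g n * (if Real.log n ≤ t then 1 else 0)
    with hW'
  have hsub : ∀ t ≤ v, ∀ F : ℕ → ℝ, ∑ n ∈ Ioc 0 ⌊Real.exp t⌋₊, F n =
      ∑ n ∈ Ioc 0 ⌊Real.exp v⌋₊, if Real.log n ≤ t then F n else 0 := by
    intro t ht F
    rw [← sum_filter]
    refine sum_congr ?_ fun _ _ => rfl
    ext n
    rw [mem_filter]
    constructor
    · intro h
      have hn := (mem_Ioc.1 h).1
      have h' := (mem_Ioc_floor_exp_iff hn).1 h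
      exact ⟨(mem_Ioc_floor_exp_iff hn).2 (h'.trans ht), h'⟩
    · rintro ⟨h, h'⟩
      exact (mem_Ioc_floor_exp_iff (mem_Ioc.1 h).1).2 h'
  have hWeq : ∀ t ≤ v, ∑ n ∈ Ioc 0 ⌊Real.exp t⌋₊, g n * (t - Real.log n) = W t := by
    intro t ht
    rw [hsub t ht, hW]
    refine sum_congr rfl fun n _ => ?_
    split_ifs with h
    · rw [max_eq_left (by linarith)]
    · rw [max_eq_right (by linarith), mul_zero]
  have hWeq' : ∀ t ≤ v, ∑ n ∈ Ioc 0 ⌊Real.exp t⌋₊, g n = W' t := by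
    intro t ht
    rw [hsub t ht, hW']
    refine sum_congr rfl fun n _ => ?_
    split_ifs <;> simp
  have hderiv : ∀ t, HasDerivWithinAt W (W' t) (Set.Ici t) t := by
    intro t
    refine HasDerivWithinAt.fun_sum fun n _ => ?_
    exact (hasDerivWithinAt_max_sub_zero (Real.log n) t).const_mul (g n)
  have hcont : Continuous W := by fun_prop
  rw [hWeq v le_rfl, hWeq u huv]
  have key := image_norm_le_of_norm_deriv_right_le_deriv_boundary' (a := u) (b := v)
    (f := fun t => W t / t ^ 2 - W u / u ^ 2)
    (f' := fun t => (W' t * t ^ 2 - W t * (2 * t)) / (t ^ 2) ^ 2)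
    (B := fun t => E * (1 / u - 1 / t)) (B' := fun t => E * (1 / t ^ 2))
    ?_ ?_ (by simp) ?_ ?_ ?_ (Set.right_mem_Icc.2 huv)
  · simpa using key
  · refine ContinuousOn.sub (hcont.continuousOn.div (by fun_prop) fun t ht => ?_) continuousOn_const
    have := hu.trans_le ht.1
    positivity
  · intro t ht
    have ht0 := hu.trans_le ht.1
    have h2 : HasDerivWithinAt (fun s : ℝ => s ^ 2) (2 * t) (Set.Ici t) t := by
      simpa using (hasDerivAt_pow 2 t).hasDerivWithinAt
    exact ((hderiv t).fun_div h2 (by positivity)).sub_const _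
  · refine continuousOn_const.mul (continuousOn_const.sub ?_)
    refine continuousOn_const.div continuousOn_id fun t ht => ?_
    exact (hu.trans_le ht.1).ne'
  · intro t ht
    have ht0 := hu.trans_le ht.1
    have h1 : HasDerivAt (fun s : ℝ => 1 / s) (-(1 / t ^ 2)) t := by
      simpa [one_div] using hasDerivAt_inv ht0.ne'
    have h2 := ((h1.const_sub (1 / u)).const_mul (E)).hasDerivWithinAt (s := Set.Ici t)
    simpa using h2
  · intro t ht
    have ht0 := hu.trans_le ht.1
    have h := hE t ht.1
    rw [hWeq t ht.2.le, hWeq' t ht.2.le] at h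
    have e : (W' t * t ^ 2 - W t * (2 * t)) / (t ^ 2) ^ 2 = -(2 * W t - t * W' t) / t ^ 3 := by
      field_simp
      ring
    rw [e, Real.norm_eq_abs, abs_div, abs_neg, abs_of_pos (pow_pos ht0 3), div_le_iff₀ (by positivity)]
    refine h.trans (le_of_eq ?_)
    field_simp

/-- If the summatory function `J` of `g` satisfies `2 ∫ J - u J = O(E u)` in the logarithmic
variable `u`, then `J` differs from its linear main term by `O(E)`. -/
theorem abs_sum_sub_mul_le
    (hE : ∀ t, u ≤ t → |2 * ∑ n ∈ Ioc 0 ⌊Real.exp t⌋₊, g n * (t - Real.log n) -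
      t * ∑ n ∈ Ioc 0 ⌊Real.exp t⌋₊, g n| ≤ E * t)
    (hP : Tendsto (fun t : ℝ => (∑ n ∈ Ioc 0 ⌊Real.exp t⌋₊, g n) / t) atTop (𝓝 P))
    (hu : 0 < u) :
    |(∑ n ∈ Ioc 0 ⌊Real.exp u⌋₊, g n) - P * u| ≤ 3 * E := by
  have hE0 : 0 ≤ E := nonneg_of_mul_nonneg_left ((abs_nonneg _).trans (hE u le_rfl)) hu
  have hdiff := fun v huv => abs_logMean_div_sq_sub_le hE hu (v := v) huv
  have hEu := hE u le_rfl
  set J : ℝ → ℝ := fun t => ∑ n ∈ Ioc 0 ⌊Real.exp t⌋₊, g n with hJ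
  set T : ℝ → ℝ := fun t => ∑ n ∈ Ioc 0 ⌊Real.exp t⌋₊, g n * (t - Real.log n) with hT
  change ∀ v, u ≤ v → |T v / v ^ 2 - T u / u ^ 2| ≤ E * (1 / u - 1 / v) at hdiff
  change |2 * T u - u * J u| ≤ E * u at hEu
  change ∀ t, u ≤ t → |2 * T t - t * J t| ≤ E * t at hE
  change |J u - P * u| ≤ 3 * E
  have hsmall : Tendsto (fun t => (2 * T t - t * J t) / (2 * t ^ 2)) atTop (𝓝 0) := by
    refine squeeze_zero_norm' (a := fun t => E / 2 / t) ?_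
      (tendsto_const_nhds.div_atTop tendsto_id)
    filter_upwards [eventually_ge_atTop u] with t ht
    have ht0 := hu.trans_le ht
    rw [Real.norm_eq_abs, abs_div, abs_of_pos (show 0 < 2 * t ^ 2 by positivity),
      div_le_iff₀ (by positivity)]
    refine (hE t ht).trans (le_of_eq ?_)
    field_simp
  have hlim : Tendsto (fun t => T t / t ^ 2) atTop (𝓝 (P / 2)) := by
    have h := (hP.div_const 2).add hsmall
    rw [add_zero] at h
    refine h.congr' ?_
    filter_upwards [eventually_gt_atTop 0] with t ht
    field_simp
    ring
  have hle : |P / 2 - T u / u ^ 2| ≤ E / u := by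
    refine le_of_tendsto (hlim.sub_const _).abs ?_
    filter_upwards [eventually_ge_atTop u] with v hv
    refine (hdiff v hv).trans ?_
    have : 0 ≤ 1 / v := one_div_nonneg.2 (hu.le.trans hv)
    rw [div_eq_mul_one_div E u]
    gcongr
    linarith
  have h2 : |P * u ^ 2 - 2 * T u| ≤ 2 * E * u := by
    have e : P * u ^ 2 - 2 * T u = 2 * u ^ 2 * (P / 2 - T u / u ^ 2) := by
      field_simp
    rw [e, abs_mul, abs_of_pos (by positivity)]
    calc _ ≤ 2 * u ^ 2 * (E / u) := by gcongr
      _ = _ := by field_simp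
  have h3 : |J u - P * u| * u ≤ 3 * E * u := by
    rw [← abs_of_pos hu, ← abs_mul, abs_of_pos hu]
    rw [abs_le] at h2 hEu ⊢
    constructor <;> nlinarith
  exact le_of_mul_le_mul_right h3 hu

end tauberian

section logSums

variable {N : ℕ} {f : ℕ → ℝ} {K c : ℝ}

theorem squarefreeWeight_div_mul_of_coprime {m n : ℕ} (h : m.Coprime n) :
    squarefreeWeight N f (m * n) / ((m * n : ℕ) : ℝ) =
      squarefreeWeight N f m / m * (squarefreeWeight N f n / n) := by
  rw [isMultiplicative_squarefreeWeight.2 h]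
  push_cast
  exact mul_div_mul_comm _ _ _ _

theorem squarefreeWeight_div_nonneg (hf : ∀ p : ℕ, p.Prime → 0 ≤ 1 + f p) (n : ℕ) :
    0 ≤ squarefreeWeight N f n / n :=
  div_nonneg (squarefreeWeight_nonneg hf n) n.cast_nonneg

theorem squarefreeWeight_div_prime_mul_le (hf : ∀ p : ℕ, p.Prime → 0 ≤ 1 + f p) {p : ℕ}
    (hp : p.Prime) (m : ℕ) :
    squarefreeWeight N f (p * m) / ((p * m : ℕ) : ℝ) ≤
      squarefreeWeight N f p / p * (squarefreeWeight N f m / m) := by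
  by_cases h : p ∣ m
  · have : squarefreeWeight N f (p * m) = 0 := by
      rw [squarefreeWeight_apply, if_neg]
      rintro ⟨hs, -⟩
      exact hp.coprime_iff_not_dvd.1 (Nat.coprime_of_squarefree_mul hs) h
    rw [this, zero_div]
    exact mul_nonneg (squarefreeWeight_div_nonneg hf _) (squarefreeWeight_div_nonneg hf _)
  · exact (squarefreeWeight_div_mul_of_coprime (hp.coprime_iff_not_dvd.2 h)).le

open ArithmeticFunction in
theorem vonMangoldt_of_squarefree {n : ℕ} (hn : Squarefree n) :
    vonMangoldt n = if n.Prime then Real.log n else 0 := by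
  rw [vonMangoldt_apply]
  have : IsPrimePow n ↔ n.Prime :=
    ⟨fun h => Nat.squarefree_and_prime_pow_iff_prime.1 ⟨hn, h⟩, fun h => h.isPrimePow⟩
  by_cases h : n.Prime
  · simp [this, h]
  · simp [this, h]

theorem squarefreeWeight_div_mul_log (n : ℕ) :
    squarefreeWeight N f n / n * Real.log n = ∑ x ∈ n.divisorsAntidiagonal,
      if x.1.Prime ∧ ¬ x.1 ∣ x.2 then
        Real.log x.1 * (squarefreeWeight N f x.1 / x.1) * (squarefreeWeight N f x.2 / x.2)
      else 0 := by
  have hterm : ∀ x ∈ n.divisorsAntidiagonal, (if x.1.Prime ∧ ¬ x.1 ∣ x.2 then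
        Real.log x.1 * (squarefreeWeight N f x.1 / x.1) * (squarefreeWeight N f x.2 / x.2)
      else 0) = squarefreeWeight N f n / n *
        (if x.1.Prime ∧ ¬ x.1 ∣ x.2 then Real.log x.1 else 0) := by
    intro x hx
    obtain ⟨rfl, -⟩ := Nat.mem_divisorsAntidiagonal.1 hx
    split_ifs with h
    · rw [squarefreeWeight_div_mul_of_coprime (h.1.coprime_iff_not_dvd.2 h.2)]
      ring
    · simp
  rw [sum_congr rfl hterm, ← mul_sum]
  by_cases hn : Squarefree n
  · congr 1
    rw [← ArithmeticFunction.vonMangoldt_sum,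
      ← Nat.sum_divisorsAntidiagonal (fun d _ => ArithmeticFunction.vonMangoldt d)]
    refine sum_congr rfl fun x hx => ?_
    obtain ⟨rfl, -⟩ := Nat.mem_divisorsAntidiagonal.1 hx
    rw [vonMangoldt_of_squarefree (hn.of_mul_left)]
    by_cases hp : x.1.Prime
    · simp [hp, hp.coprime_iff_not_dvd.1 (Nat.coprime_of_squarefree_mul hn)]
    · simp [hp]
  · rw [squarefreeWeight_apply, if_neg (fun h => hn h.1)]
    simp

theorem abs_sum_log_mul_weight_sub_le (hK : 0 < K) (hc : 0 < c) (hN : 1 ≤ N)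
    (hf : ∀ p : ℕ, p.Prime → |f p| ≤ K * (p : ℝ) ^ (-c)) (M : ℕ) :
    |(∑ p ∈ Ioc 0 M with p.Prime, Real.log p * (squarefreeWeight N f p / p)) -
      ∑ p ∈ Ioc 0 M with p.Prime, Real.log p / p| ≤
      K * (∑' n : ℕ, Real.log n * (n : ℝ) ^ (-1 - c)) + ∑ p ∈ N.primeFactors, Real.log p / p := by
  rw [← sum_sub_distrib]
  calc _ ≤ ∑ p ∈ Ioc 0 M with p.Prime,
        |Real.log p * (squarefreeWeight N f p / p) - Real.log p / p| := abs_sum_le_sum_abs _ _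
    _ ≤ ∑ p ∈ Ioc 0 M with p.Prime, (K * (Real.log p * (p : ℝ) ^ (-1 - c)) +
        if p ∈ N.primeFactors then Real.log p / p else 0) := by
      refine sum_le_sum fun p hp => ?_
      have hp := (mem_filter.1 hp).2
      have hl : 0 ≤ Real.log p := Real.log_natCast_nonneg p
      rw [squarefreeWeight_prime hp]
      by_cases hpN : p ∣ N
      · have : p ∈ N.primeFactors := Nat.mem_primeFactors.2 ⟨hp, hpN, by lia⟩
        simp only [hpN, this, if_true, zero_div, mul_zero, zero_sub, abs_neg]
        rw [abs_of_nonneg (by positivity)]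
        have : 0 ≤ K * (Real.log p * (p : ℝ) ^ (-1 - c)) := by positivity
        linarith
      · have : p ∉ N.primeFactors := fun h => hpN (Nat.dvd_of_mem_primeFactors h)
        simp only [hpN, this, if_false, add_zero]
        rw [show Real.log p * ((1 + f p) / p) - Real.log p / p = Real.log p * (f p / p) by ring,
          abs_mul, abs_of_nonneg hl, abs_div, Nat.abs_cast, rpow_neg_one_sub hp.pos]
        calc _ ≤ Real.log p * (K * (p : ℝ) ^ (-c) / p) := by gcongr; exact hf p hp
          _ = _ := by ring
    _ ≤ _ := by
      rw [sum_add_distrib, ← mul_sum]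
      refine add_le_add ?_ ?_
      · gcongr
        exact (summable_log_mul_rpow hc).sum_le_tsum _ fun n _ => by positivity
      · rw [← sum_filter]
        exact sum_le_sum_of_subset_of_nonneg (fun p hp => (mem_filter.1 hp).2)
          fun p _ _ => by positivity

theorem abs_sum_mul_log_sub_le (hK : 0 < K) (hc : 0 < c)
    (hf : ∀ p : ℕ, p.Prime → |f p| ≤ K * (p : ℝ) ^ (-c))
    (hf0 : ∀ p : ℕ, p.Prime → 0 ≤ 1 + f p) (M : ℕ) :
    |(∑ n ∈ Ioc 0 M, squarefreeWeight N f n / n * Real.log n) -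
      ∑ m ∈ Ioc 0 M, squarefreeWeight N f m / m *
        ∑ p ∈ Ioc 0 (M / m) with p.Prime, Real.log p * (squarefreeWeight N f p / p)| ≤
      (1 + K) ^ 2 * (∑' n : ℕ, Real.log n * (n : ℝ) ^ (-1 - 1 : ℝ)) *
        ∑ n ∈ Ioc 0 M, squarefreeWeight N f n / n := by
  set g : ℕ → ℝ := fun n => squarefreeWeight N f n / n with hg
  have hg0 : ∀ n, 0 ≤ g n := squarefreeWeight_div_nonneg hf0
  have h1 : ∑ n ∈ Ioc 0 M, g n * Real.log n = ∑ p ∈ Ioc 0 M, ∑ m ∈ Ioc 0 (M / p),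
      if p.Prime ∧ ¬ p ∣ m then Real.log p * g p * g m else 0 := by
    rw [← sum_Ioc_sum_divisorsAntidiagonal
      (fun p m => if p.Prime ∧ ¬ p ∣ m then Real.log p * g p * g m else 0)]
    exact sum_congr rfl fun n _ => squarefreeWeight_div_mul_log n
  have h2 : ∑ m ∈ Ioc 0 M, g m * ∑ p ∈ Ioc 0 (M / m) with p.Prime, Real.log p * g p =
      ∑ p ∈ Ioc 0 M, ∑ m ∈ Ioc 0 (M / p), if p.Prime then Real.log p * g p * g m else 0 := by
    rw [sum_Ioc_sum_Ioc_div_comm (fun p m => if p.Prime then Real.log p * g p * g m else 0)]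
    refine sum_congr rfl fun m _ => ?_
    rw [mul_sum, sum_filter]
    refine sum_congr rfl fun p _ => ?_
    split_ifs <;> ring
  have h3 : (∑ m ∈ Ioc 0 M, g m * ∑ p ∈ Ioc 0 (M / m) with p.Prime, Real.log p * g p) -
      ∑ n ∈ Ioc 0 M, g n * Real.log n =
      ∑ p ∈ Ioc 0 M with p.Prime, Real.log p * g p * ∑ m ∈ Ioc 0 (M / p) with p ∣ m, g m := by
    rw [h1, h2, ← sum_sub_distrib, sum_filter]
    refine sum_congr rfl fun p _ => ?_
    rw [← sum_sub_distrib, sum_filter, mul_sum]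
    by_cases hp : p.Prime
    · rw [if_pos hp]
      refine sum_congr rfl fun m _ => ?_
      by_cases hpm : p ∣ m <;> simp [hp, hpm]
    · simp [hp]
  change |(∑ n ∈ Ioc 0 M, g n * Real.log n) -
    ∑ m ∈ Ioc 0 M, g m * ∑ p ∈ Ioc 0 (M / m) with p.Prime, Real.log p * g p| ≤ _ * ∑ n ∈ Ioc 0 M, g n
  set J := ∑ n ∈ Ioc 0 M, g n with hJ
  have hJ0 : 0 ≤ J := sum_nonneg fun n _ => hg0 n
  rw [abs_sub_comm, h3, abs_of_nonneg]
  · calc _ ≤ ∑ p ∈ Ioc 0 M with p.Prime,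
          (1 + K) ^ 2 * (Real.log p * (p : ℝ) ^ (-1 - 1 : ℝ)) * J := by
          refine sum_le_sum fun p hp => ?_
          have hp := (mem_filter.1 hp).2
          have hl : 0 ≤ Real.log p := Real.log_natCast_nonneg p
          have hp0 : (0 : ℝ) < p := by exact_mod_cast hp.pos
          have hinner : ∑ m ∈ Ioc 0 (M / p) with p ∣ m, g m ≤ g p * J := by
            rw [sum_Ioc_dvd hp.pos, hJ, mul_sum]
            calc _ ≤ ∑ k ∈ Ioc 0 (M / p / p), g p * g k :=
                  sum_le_sum fun k _ => squarefreeWeight_div_prime_mul_le hf0 hp k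
              _ ≤ _ := sum_le_sum_of_subset_of_nonneg
                  (Ioc_subset_Ioc_right ((Nat.div_le_self _ _).trans (Nat.div_le_self _ _)))
                  fun k _ _ => mul_nonneg (hg0 p) (hg0 k)
          have hgp : g p ≤ (1 + K) / p := by
            have hfK := abs_le_of_abs_le_mul_rpow hK hc hf hp
            simp only [hg, squarefreeWeight_prime hp]
            gcongr
            split_ifs
            · linarith
            · linarith [le_abs_self (f p)]
          calc _ ≤ Real.log p * g p * (g p * J) :=
                mul_le_mul_of_nonneg_left hinner (mul_nonneg hl (hg0 p))
            _ = Real.log p * J * (g p) ^ 2 := by ring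
            _ ≤ Real.log p * J * ((1 + K) / p) ^ 2 := by
                gcongr
                exact hg0 p
            _ = _ := by
                rw [show (-1 - 1 : ℝ) = -2 by norm_num, rpow_neg_two]
                field_simp
      _ = (1 + K) ^ 2 * (∑ p ∈ Ioc 0 M with p.Prime, Real.log p * (p : ℝ) ^ (-1 - 1 : ℝ)) * J := by
          rw [← sum_mul, ← mul_sum]
      _ ≤ _ := by
          gcongr
          exact (summable_log_mul_rpow one_pos).sum_le_tsum _ fun n _ => by positivity
  · refine sum_nonneg fun p _ => mul_nonneg (mul_nonneg (Real.log_natCast_nonneg p) (hg0 p)) ?_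
    exact sum_nonneg fun m _ => hg0 m

/-- The Levin–Fainleib relation between `∑ g(n)` and its logarithmic mean. -/
theorem exists_abs_two_mul_logMean_sub_le (hK : 0 < K) (hc : 0 < c) :
    ∃ A : ℝ, 0 ≤ A ∧ ∀ N : ℕ, 1 ≤ N → ∀ f : ℕ → ℝ,
      (∀ p : ℕ, p.Prime → |f p| ≤ K * (p : ℝ) ^ (-c)) → (∀ p : ℕ, p.Prime → 0 ≤ 1 + f p) →
      ∀ t : ℝ, 0 ≤ t →
        |2 * (∑ n ∈ Ioc 0 ⌊Real.exp t⌋₊, squarefreeWeight N f n / n * (t - Real.log n)) -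
          t * ∑ n ∈ Ioc 0 ⌊Real.exp t⌋₊, squarefreeWeight N f n / n| ≤
        A * Real.log (Real.log (N + 2)) *
          ∑ n ∈ Ioc 0 ⌊Real.exp t⌋₊, squarefreeWeight N f n / n := by
  obtain ⟨A₁, hA₁, hM⟩ := exists_abs_sum_log_div_floor_sub_log_le
  obtain ⟨A₂, hA₂, hL⟩ := exists_sum_primeFactors_log_div_le
  set S₁ := K * ∑' n : ℕ, Real.log n * (n : ℝ) ^ (-1 - c) with hS₁
  set S₂ := (1 + K) ^ 2 * ∑' n : ℕ, Real.log n * (n : ℝ) ^ (-1 - 1 : ℝ) with hS₂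
  have hS₁0 : 0 ≤ S₁ := mul_nonneg hK.le (tsum_nonneg fun n => by positivity)
  have hS₂0 : 0 ≤ S₂ := mul_nonneg (by positivity) (tsum_nonneg fun n => by positivity)
  refine ⟨(A₁ + S₁ + S₂ + 1) * A₂, by positivity, fun N hN f hf hf0 t ht => ?_⟩
  set M := ⌊Real.exp t⌋₊ with hMdef
  have hG := abs_sum_mul_log_sub_le (N := N) hK hc hf hf0 M
  set g : ℕ → ℝ := fun n => squarefreeWeight N f n / n with hg
  have hg0 : ∀ n, 0 ≤ g n := squarefreeWeight_div_nonneg hf0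
  change |(∑ n ∈ Ioc 0 M, g n * Real.log n) -
    ∑ m ∈ Ioc 0 M, g m * ∑ p ∈ Ioc 0 (M / m) with p.Prime, Real.log p * g p| ≤
      S₂ * ∑ n ∈ Ioc 0 M, g n at hG
  change |2 * (∑ n ∈ Ioc 0 M, g n * (t - Real.log n)) - t * ∑ n ∈ Ioc 0 M, g n| ≤
    _ * ∑ n ∈ Ioc 0 M, g n
  set J := ∑ n ∈ Ioc 0 M, g n with hJ
  have hJ0 : 0 ≤ J := sum_nonneg fun n _ => hg0 n
  set L := ∑ p ∈ N.primeFactors, Real.log p / (p : ℝ) with hLdef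
  have hL0 : 0 ≤ L := sum_nonneg fun p _ => by positivity
  have hR : ∀ m ∈ Ioc 0 M,
      |(∑ p ∈ Ioc 0 (M / m) with p.Prime, Real.log p * g p) - (t - Real.log m)| ≤
        A₁ + S₁ + L := by
    intro m hm
    have hm0 : (0 : ℝ) < m := by exact_mod_cast (mem_Ioc.1 hm).1
    have hmt : (m : ℝ) ≤ Real.exp t := (Nat.le_floor_iff (Real.exp_pos t).le).1 (mem_Ioc.1 hm).2
    have h1 := hM (Real.exp t / m) ((one_le_div hm0).2 hmt)
    rw [Nat.floor_div_natCast, Real.log_div (Real.exp_pos t).ne' hm0.ne', Real.log_exp] at h1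
    have h2 := abs_sum_log_mul_weight_sub_le hK hc hN hf (M / m)
    refine (abs_sub_le _ _ _).trans ((add_le_add h2 h1).trans (le_of_eq ?_))
    ring
  have hR' : |(∑ m ∈ Ioc 0 M, g m * ∑ p ∈ Ioc 0 (M / m) with p.Prime, Real.log p * g p) -
      ∑ m ∈ Ioc 0 M, g m * (t - Real.log m)| ≤ (A₁ + S₁ + L) * J := by
    rw [← sum_sub_distrib, hJ, mul_sum]
    refine (abs_sum_le_sum_abs _ _).trans (sum_le_sum fun m hm => ?_)
    rw [← mul_sub, abs_mul, abs_of_nonneg (hg0 m), mul_comm]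
    exact mul_le_mul_of_nonneg_right (hR m hm) (hg0 m)
  have hT : 2 * (∑ n ∈ Ioc 0 M, g n * (t - Real.log n)) - t * J =
      (∑ n ∈ Ioc 0 M, g n * (t - Real.log n)) - ∑ n ∈ Ioc 0 M, g n * Real.log n := by
    have : ∑ n ∈ Ioc 0 M, g n * (t - Real.log n) = t * J - ∑ n ∈ Ioc 0 M, g n * Real.log n := by
      rw [hJ, mul_sum, ← sum_sub_distrib]
      exact sum_congr rfl fun n _ => by ring
    linarith
  rw [hT, abs_sub_comm]
  calc _ ≤ S₂ * J + (A₁ + S₁ + L) * J := (abs_sub_le _ _ _).trans (add_le_add hG hR')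
    _ ≤ ((A₁ + S₁ + S₂ + 1) * (1 + L)) * J := by
      rw [← add_mul]
      refine mul_le_mul_of_nonneg_right ?_ hJ0
      nlinarith [mul_nonneg hA₁ hL0, mul_nonneg hS₁0 hL0, mul_nonneg hS₂0 hL0]
    _ ≤ _ := by
      refine mul_le_mul_of_nonneg_right ?_ hJ0
      rw [mul_assoc]
      exact mul_le_mul_of_nonneg_left (hL N hN) (by positivity)

theorem summable_local_factor_sub_one (hK : 0 < K) (hc : 0 < c)
    (hf : ∀ p : ℕ, p.Prime → |f p| ≤ K * (p : ℝ) ^ (-c)) :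
    Summable fun p : Nat.Primes =>
      (if (p : ℕ) ∣ N then 1 else (1 - 1 / (p : ℝ) ^ 2) * (1 + f p / ((p : ℝ) + 1))) - 1 := by
  have hs : Summable fun p : ℕ => K * (p : ℝ) ^ (-1 - c) + (1 + K) * (p : ℝ) ^ (-2 : ℝ) :=
    ((Real.summable_nat_rpow.2 (by linarith)).mul_left _).add
      ((Real.summable_nat_rpow.2 (by norm_num)).mul_left _)
  refine Summable.of_norm_bounded (hs.comp_injective Nat.Primes.coe_nat_injective) ?_
  rintro ⟨p, hp⟩
  change ‖(if p ∣ N then (1 : ℝ) else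
    (1 - 1 / (p : ℝ) ^ 2) * (1 + f p / ((p : ℝ) + 1))) - 1‖ ≤
      K * (p : ℝ) ^ (-1 - c) + (1 + K) * (p : ℝ) ^ (-2 : ℝ)
  have hp0 : (0 : ℝ) < p := by exact_mod_cast hp.pos
  split_ifs
  · simp only [sub_self, norm_zero]
    positivity
  · have hfK := abs_le_of_abs_le_mul_rpow hK hc hf hp
    rw [rpow_neg_one_sub hp.pos, rpow_neg_two, Real.norm_eq_abs]
    have e : (1 - 1 / (p : ℝ) ^ 2) * (1 + f p / ((p : ℝ) + 1)) - 1 =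
        f p / (p + 1) - 1 / (p : ℝ) ^ 2 * (1 + f p / (p + 1)) := by ring
    have h1 : |f p / ((p : ℝ) + 1)| ≤ K * ((p : ℝ) ^ (-c) / p) := by
      rw [abs_div, abs_of_pos (show (0 : ℝ) < p + 1 by positivity), ← mul_div_assoc]
      exact div_le_div₀ (by positivity) (hf p hp) hp0 (by linarith)
    have h2 : |1 + f p / ((p : ℝ) + 1)| ≤ 1 + K := by
      refine (abs_add_le _ _).trans ?_
      rw [abs_one, abs_div, abs_of_pos (show (0 : ℝ) < p + 1 by positivity)]
      have := div_le_self (abs_nonneg (f p)) (show (1 : ℝ) ≤ p + 1 by linarith)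
      linarith
    rw [e]
    refine (abs_sub _ _).trans (add_le_add h1 ?_)
    rw [abs_mul, abs_of_nonneg (by positivity), mul_comm]
    gcongr

end logSums

theorem levinson_lemma_3_11 (K c : ℝ) (hK : 0 < K) (hc : 0 < c) :
    ∃ C : ℝ, ∀ N : ℕ, 1 ≤ N → ∀ f : ℕ → ℝ,
      (∀ p : ℕ, p.Prime → |f p| ≤ K * (p : ℝ) ^ (-c)) →
      (∀ p : ℕ, p.Prime → 0 ≤ 1 + f p) →
      ∀ x : ℝ, 2 ≤ x →
        |(∑ n ∈ Finset.Icc 1 ⌊x⌋₊,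
            if Squarefree n ∧ Nat.gcd n N = 1 then
              (1 / (n : ℝ)) * ∏ p ∈ n.primeFactors, (1 + f p)
            else 0) -
          (∏ p ∈ N.primeFactors, (1 - 1 / (p : ℝ))) *
            (∏' p : Nat.Primes,
              if (p : ℕ) ∣ N then 1
              else (1 - 1 / (p : ℝ) ^ 2) * (1 + f p / ((p : ℝ) + 1))) *
            Real.log x| ≤ C * Real.log (Real.log (N + 2)) := by
  obtain ⟨A, hA, hLF⟩ := exists_abs_two_mul_logMean_sub_le hK hc
  set B := Real.exp (∑' p : ℕ, (K * (p : ℝ) ^ (-1 - c) + (1 + K) * (p : ℝ) ^ (-2 : ℝ) +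
    if p ∈ (1 : ℕ).primeFactors then 1 else 0)) with hB
  refine ⟨3 * (A * (3 * B)), fun N hN f hf hf0 x hx => ?_⟩
  have hx0 : 0 < x := by linarith
  have hlog2 : 1 / 2 < Real.log 2 := by linarith [Real.log_two_gt_d9]
  have hlogx : 1 / 2 < Real.log x := hlog2.trans_le (Real.log_le_log (by norm_num) hx)
  obtain ⟨hLge, hLpos⟩ := log_log_add_two_ge hN
  have hJ : (∑ n ∈ Finset.Icc 1 ⌊x⌋₊,
      if Squarefree n ∧ Nat.gcd n N = 1 then
        (1 / (n : ℝ)) * ∏ p ∈ n.primeFactors, (1 + f p) else 0) =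
      ∑ n ∈ Ioc 0 ⌊Real.exp (Real.log x)⌋₊, squarefreeWeight N f n / n := by
    rw [Real.exp_log hx0]
    refine sum_congr rfl fun n _ => ?_
    rw [squarefreeWeight_apply]
    split_ifs
    · ring
    · simp
  obtain ⟨hs, -⟩ := summable_abs_weightTwist_div hK hc hN hf
  obtain ⟨hs₁, hs₁B⟩ := summable_abs_weightTwist_div (N := 1) hK hc le_rfl hf
  rw [hJ, ← tsum_weightTwist_div hN hs (summable_local_factor_sub_one hK hc hf)]
  have hbound : ∀ t, Real.log x ≤ t →
      ∑ n ∈ Ioc 0 ⌊Real.exp t⌋₊, squarefreeWeight N f n / n ≤ 3 * B * t := by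
    intro t ht
    have hB0 : 0 < B := Real.exp_pos _
    calc _ ≤ ∑ n ∈ Ioc 0 ⌊Real.exp t⌋₊, squarefreeWeight 1 f n / n := by
          refine sum_le_sum fun n _ => ?_
          gcongr
          exact squarefreeWeight_le_one_right hf0 n
      _ ≤ _ := sum_squarefreeWeight_div_le (Real.one_le_exp (by linarith)) hs₁
      _ ≤ B * (1 + t) := by
          rw [Real.log_exp]
          exact mul_le_mul_of_nonneg_right hs₁B (by linarith)
      _ ≤ _ := by nlinarith
  refine (abs_sum_sub_mul_le (E := A * Real.log (Real.log (N + 2)) * (3 * B)) (fun t ht => ?_)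
    (tendsto_sum_squarefreeWeight_div hs) (by linarith)).trans (le_of_eq (by ring))
  refine (hLF N hN f hf hf0 t (by linarith)).trans ?_
  rw [mul_assoc (A * Real.log (Real.log (N + 2)))]
  exact mul_le_mul_of_nonneg_left (hbound t ht) (mul_nonneg hA (hLpos.le.trans hLge))
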